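/- arXiv:1509.07983 — 3 statements merged into one kernel-verified Lean document; each statement's English description precedes it below -/
import Mathlib

section
/- Let A ∈ ℝ^{n×n} be symmetric, let v₁ be a unit eigenvector of A whose eigenvalue λ₁ satisfies |λ₁| = ‖A‖_{2→2}, and let v be a unit eigenvector of A orthogonal to v₁. Let q₀ be a unit vector, let q_j be the power iterates of A started at q₀ (assume Aq_i ≠ 0 for 0 ≤ i < j), and let ε > 0. If (vᵀq_j)² > 1 − ε, then (v₁ᵀq₀)² < ε. -/
open scoped BigOperators
open Matrix

namespace Stmt6

/-- Euclidean norm of a vector in `ℝⁿ`. -/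
noncomputable def enorm {n : ℕ} (v : Fin n → ℝ) : ℝ := Real.sqrt (∑ i, v i ^ 2)

/-- Euclidean inner product of vectors in `ℝⁿ`. -/
def dot {n : ℕ} (v w : Fin n → ℝ) : ℝ := ∑ i, v i * w i

end Stmt6

open Stmt6

theorem aux_dot_eq {n : ℕ} (v w : Fin n → ℝ) : Stmt6.dot v w = v ⬝ᵥ w := rfl

theorem aux_enorm_sq {n : ℕ} (v : Fin n → ℝ) : Stmt6.enorm v ^ 2 = v ⬝ᵥ v := by
  unfold Stmt6.enorm
  rw [Real.sq_sqrt (Finset.sum_nonneg fun i _ => sq_nonneg _)]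
  simp [dotProduct, sq]

theorem aux_enorm_eq {n : ℕ} (v : Fin n → ℝ) : Stmt6.enorm v = ‖WithLp.toLp 2 v‖ := by
  rw [EuclideanSpace.norm_eq]
  simp [Stmt6.enorm]

theorem aux_dot_nonneg {n : ℕ} (v : Fin n → ℝ) : 0 ≤ v ⬝ᵥ v := by
  rw [← aux_enorm_sq]; positivity

theorem aux_opbound {n : ℕ} (A : Matrix (Fin n) (Fin n) ℝ) (x : Fin n → ℝ) :
    Stmt6.enorm (A *ᵥ x) ≤ ‖Matrix.toEuclideanCLM (𝕜 := ℝ) A‖ * Stmt6.enorm x := by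
  rw [aux_enorm_eq, aux_enorm_eq, ← Matrix.toEuclideanCLM_toLp]
  exact ContinuousLinearMap.le_opNorm _ _

theorem aux_bessel {n : ℕ} (u v q : Fin n → ℝ) (hu : u ⬝ᵥ u = 1) (hv : v ⬝ᵥ v = 1)
    (huv : v ⬝ᵥ u = 0) (hq : q ⬝ᵥ q = 1) : (u ⬝ᵥ q) ^ 2 + (v ⬝ᵥ q) ^ 2 ≤ 1 := by
  have h := aux_dot_nonneg (q - (u ⬝ᵥ q) • u - (v ⬝ᵥ q) • v)
  have huv' : u ⬝ᵥ v = 0 := by rw [dotProduct_comm]; exact huv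
  simp only [sub_dotProduct, dotProduct_sub, smul_dotProduct, dotProduct_smul, smul_eq_mul,
    hu, hv, huv, huv', hq, dotProduct_comm q u, dotProduct_comm q v] at h
  nlinarith

/-- If `v` is a unit eigenvector of the symmetric matrix `A` orthogonal
to a leading unit eigenvector `v₁` (whose eigenvalue `λ₁` satisfies `|λ₁| = ‖A‖₂→₂`),
and the `j`-th power iterate satisfies `(vᵀq_j)² > 1 − ε`, then the initialization was
poor: `(v₁ᵀq₀)² < ε`. -/
theorem power_iteration_false_positive
    (n : ℕ) (A : Matrix (Fin n) (Fin n) ℝ) (hA : A.IsSymm)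
    (lam1 : ℝ) (v1 : Fin n → ℝ) (hv1unit : Stmt6.enorm v1 = 1)
    (hv1eig : A *ᵥ v1 = lam1 • v1)
    (hlead : |lam1| = ‖Matrix.toEuclideanCLM (𝕜 := ℝ) A‖)
    (lam : ℝ) (v : Fin n → ℝ) (hvunit : Stmt6.enorm v = 1)
    (hveig : A *ᵥ v = lam • v) (horth : dot v v1 = 0)
    (q : ℕ → Fin n → ℝ) (hq0unit : Stmt6.enorm (q 0) = 1)
    (j : ℕ)
    (hne : ∀ i < j, A *ᵥ q i ≠ 0)
    (hrec : ∀ i < j, q (i + 1) = (Stmt6.enorm (A *ᵥ q i))⁻¹ • (A *ᵥ q i))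
    (ε : ℝ) (hε : 0 < ε)
    (hconv : 1 - ε < dot v (q j) ^ 2) :
    dot v1 (q 0) ^ 2 < ε := by
  have key : ∀ i, i ≤ j → q i ⬝ᵥ q i = 1 ∧ (v1 ⬝ᵥ q 0) ^ 2 ≤ (v1 ⬝ᵥ q i) ^ 2 := by
    intro i
    induction i with
    | zero =>
      intro _
      refine ⟨?_, le_rfl⟩
      rw [← aux_enorm_sq, hq0unit]; norm_num
    | succ i ih =>
      intro hi
      obtain ⟨h1, h2⟩ := ih (by omega)
      have hij : i < j := by omega
      have hN : Stmt6.enorm (A *ᵥ q i) ≠ 0 := by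
        intro h0
        apply hne i hij
        have := aux_enorm_sq (A *ᵥ q i)
        rw [h0] at this
        exact dotProduct_self_eq_zero.mp (by rw [← this]; norm_num)
      have hNsq := aux_enorm_sq (A *ᵥ q i)
      have hb := aux_opbound A (q i)
      have hN0 : 0 ≤ Stmt6.enorm (A *ᵥ q i) := Real.sqrt_nonneg _
      have hqi : Stmt6.enorm (q i) = 1 := by
        have h3 := aux_enorm_sq (q i)
        have h4 : 0 ≤ Stmt6.enorm (q i) := Real.sqrt_nonneg _
        rw [h1] at h3
        nlinarith
      rw [← hlead, hqi, mul_one] at hb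
      have hAd : v1 ⬝ᵥ (A *ᵥ q i) = lam1 * (v1 ⬝ᵥ q i) := by
        rw [dotProduct_mulVec, ← mulVec_transpose, hA.eq, hv1eig, smul_dotProduct, smul_eq_mul]
      rw [hrec i hij]
      set N := Stmt6.enorm (A *ᵥ q i) with hNdef
      have hNpos : 0 < N := lt_of_le_of_ne hN0 (Ne.symm hN)
      refine ⟨?_, h2.trans ?_⟩
      · rw [smul_dotProduct, dotProduct_smul, ← hNsq, smul_eq_mul, smul_eq_mul]
        field_simp
      · rw [dotProduct_smul, hAd, smul_eq_mul]
        have hl : N ^ 2 ≤ lam1 ^ 2 := by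
          rw [← sq_abs lam1]
          exact pow_le_pow_left₀ hN0 hb 2
        have he : (N⁻¹ * (lam1 * (v1 ⬝ᵥ q i))) ^ 2
            = lam1 ^ 2 * (v1 ⬝ᵥ q i) ^ 2 / N ^ 2 := by
          field_simp
        rw [he, le_div_iff₀ (by positivity)]
        nlinarith [mul_le_mul_of_nonneg_right hl (sq_nonneg (v1 ⬝ᵥ q i))]
  obtain ⟨h1, h2⟩ := key j le_rfl
  have hu : v1 ⬝ᵥ v1 = 1 := by rw [← aux_enorm_sq, hv1unit]; norm_num
  have hv : v ⬝ᵥ v = 1 := by rw [← aux_enorm_sq, hvunit]; norm_num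
  rw [aux_dot_eq] at horth hconv ⊢
  have := aux_bessel v1 v (q j) hu hv horth h1
  linarith
end

section
/- Let A ∈ ℝ^{n×n} be symmetric and let v₁ be a unit eigenvector of A whose eigenvalue λ₁ satisfies |λ₁| = ‖A‖_{2→2}. Then for every unit vector q with Aq ≠ 0, one has (v₁ᵀ(Aq/‖Aq‖₂))² ≥ (v₁ᵀq)²; consequently, along the power iteration the quantity (v₁ᵀq_j)² is nondecreasing in j. -/
open scoped BigOperators
open Matrix

namespace Stmt7

/-- Euclidean norm of a vector in `ℝⁿ`. -/
noncomputable def enorm {n : ℕ} (v : Fin n → ℝ) : ℝ := Real.sqrt (∑ i, v i ^ 2)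

/-- Euclidean inner product of vectors in `ℝⁿ`. -/
def dot {n : ℕ} (v w : Fin n → ℝ) : ℝ := ∑ i, v i * w i

end Stmt7

open Stmt7

/-- For a symmetric `A` with leading unit eigenvector `v₁`
(`|λ₁| = ‖A‖₂→₂`), one power iteration step does not decrease `(v₁ᵀq)²`; consequently,
`(v₁ᵀq_j)²` is nondecreasing along the power iteration. -/
theorem power_iteration_monotone
    (n : ℕ) (A : Matrix (Fin n) (Fin n) ℝ) (hA : A.IsSymm)
    (lam1 : ℝ) (v1 : Fin n → ℝ) (hv1unit : Stmt7.enorm v1 = 1)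
    (hv1eig : A *ᵥ v1 = lam1 • v1)
    (hlead : |lam1| = ‖Matrix.toEuclideanCLM (𝕜 := ℝ) A‖) :
    (∀ q : Fin n → ℝ, Stmt7.enorm q = 1 → A *ᵥ q ≠ 0 →
      dot v1 q ^ 2 ≤ dot v1 ((Stmt7.enorm (A *ᵥ q))⁻¹ • (A *ᵥ q)) ^ 2) ∧
    (∀ q : ℕ → Fin n → ℝ, Stmt7.enorm (q 0) = 1 →
      (∀ i : ℕ, A *ᵥ q i ≠ 0 ∧ q (i + 1) = (Stmt7.enorm (A *ᵥ q i))⁻¹ • (A *ᵥ q i)) →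
      ∀ i j : ℕ, i ≤ j → dot v1 (q i) ^ 2 ≤ dot v1 (q j) ^ 2) := by
  have henorm : ∀ v : Fin n → ℝ, Stmt7.enorm v = ‖WithLp.toLp 2 v‖ := by
    intro v
    simp [Stmt7.enorm, EuclideanSpace.norm_eq]
  have hdot : ∀ q : Fin n → ℝ, dot v1 (A *ᵥ q) = lam1 * dot v1 q := by
    intro q
    have h1 : dot v1 (A *ᵥ q) = v1 ⬝ᵥ (A *ᵥ q) := rfl
    have h2 : dot v1 q = v1 ⬝ᵥ q := rfl
    rw [h1, h2, Matrix.dotProduct_mulVec, ← Matrix.mulVec_transpose, hA.eq, hv1eig,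
      smul_dotProduct, smul_eq_mul]
  have hsmul : ∀ (c : ℝ) (w : Fin n → ℝ), dot v1 (c • w) = c * dot v1 w := by
    intro c w
    have h1 : dot v1 (c • w) = v1 ⬝ᵥ (c • w) := rfl
    have h2 : dot v1 w = v1 ⬝ᵥ w := rfl
    rw [h1, h2, dotProduct_smul, smul_eq_mul]
  have hpos : ∀ w : Fin n → ℝ, w ≠ 0 → 0 < Stmt7.enorm w := by
    intro w hw
    rw [henorm, norm_pos_iff]
    intro h
    exact hw (by simpa using congrArg WithLp.ofLp h)
  have hbound : ∀ q : Fin n → ℝ, Stmt7.enorm q = 1 → Stmt7.enorm (A *ᵥ q) ≤ |lam1| := by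
    intro q hq
    have h := (Matrix.toEuclideanCLM (𝕜 := ℝ) A).le_opNorm (WithLp.toLp 2 q)
    rw [← henorm q, hq, mul_one, ← hlead, Matrix.toEuclideanCLM_toLp] at h
    rw [henorm]
    exact h
  have hstep : ∀ q : Fin n → ℝ, Stmt7.enorm q = 1 → A *ᵥ q ≠ 0 →
      dot v1 q ^ 2 ≤ dot v1 ((Stmt7.enorm (A *ᵥ q))⁻¹ • (A *ᵥ q)) ^ 2 := by
    intro q hq hne
    have hp := hpos _ hne
    have hb := hbound q hq
    rw [hsmul, hdot, ← mul_assoc, mul_pow]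
    apply le_mul_of_one_le_left (sq_nonneg _)
    rw [← sq_abs, abs_mul, abs_inv, abs_of_pos hp]
    apply one_le_pow₀
    rw [inv_mul_eq_div, one_le_div hp]
    exact hb
  refine ⟨hstep, ?_⟩
  intro q h0 hq
  have hunit : ∀ i, Stmt7.enorm (q i) = 1 := by
    intro i
    cases i with
    | zero => exact h0
    | succ k =>
      have hp := hpos _ (hq k).1
      rw [(hq k).2, henorm, WithLp.toLp_smul, norm_smul, ← henorm, norm_inv,
        Real.norm_of_nonneg hp.le, inv_mul_cancel₀ hp.ne']
  have hmono : Monotone (fun i => dot v1 (q i) ^ 2) := by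
    apply monotone_nat_of_le_succ
    intro i
    have := hstep (q i) (hunit i) (hq i).1
    rw [← (hq i).2] at this
    exact this
  intro i j hij
  exact hmono hij
end

section
/- Let A ∈ ℝ^{n×n} be symmetric with eigenvalues λ₁,…,λ_n (counted with multiplicity) ordered so that |λ₁| > |λ₂| ≥ … ≥ |λ_n|, with 0 < |λ₂|, and let v₁ be a unit eigenvector for λ₁ (so span(v₁) is the unique leading eigenspace). Let 0 < ε < 1, let q₀ be a unit vector with (v₁ᵀq₀)² ≥ ε, and let q_j be the power iterates of A started at q₀. Then min{ j ≥ 0 : (v₁ᵀq_j)² > 1 − ε } ≤ 3·log(1/ε)/(2·log(|λ₁|/|λ₂|)) + 1. -/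
open scoped BigOperators
open Matrix

namespace Stmt8

/-- Euclidean norm of a vector in `ℝⁿ`. -/
noncomputable def enorm {n : ℕ} (v : Fin n → ℝ) : ℝ := Real.sqrt (∑ i, v i ^ 2)

/-- Euclidean inner product of vectors in `ℝⁿ`. -/
def dot {n : ℕ} (v w : Fin n → ℝ) : ℝ := ∑ i, v i * w i

end Stmt8

open Stmt8

theorem aux_parseval {n : ℕ} (b : OrthonormalBasis (Fin n) ℝ (EuclideanSpace ℝ (Fin n)))
    (v w : Fin n → ℝ) :
    dot v w = ∑ i, dot (b i).ofLp v * dot (b i).ofLp w := by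
  have h := b.sum_inner_mul_inner (WithLp.toLp 2 v) (WithLp.toLp 2 w)
  have e : ∀ x y : EuclideanSpace ℝ (Fin n), inner ℝ x y = dot x.ofLp y.ofLp := by
    intro x y
    simp [PiLp.inner_apply, dot, mul_comm]
  simp only [e] at h
  rw [← h]
  refine Finset.sum_congr rfl fun i _ => ?_
  congr 1
  simp [dot, mul_comm]

theorem aux_symm {n : ℕ} (A : Matrix (Fin n) (Fin n) ℝ) (hA : A.IsHermitian) (u w : Fin n → ℝ)
    (m : ℝ) (hu : A *ᵥ u = m • u) : dot u (A *ᵥ w) = m * dot u w := by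
  have hT : Aᵀ = A := by
    have := hA.eq
    rwa [Matrix.conjTranspose_eq_transpose_of_trivial] at this
  change u ⬝ᵥ (A *ᵥ w) = m * (u ⬝ᵥ w)
  rw [Matrix.dotProduct_mulVec, ← Matrix.mulVec_transpose, hT, hu, smul_dotProduct, smul_eq_mul]

theorem aux_enorm {n : ℕ} (w : Fin n → ℝ) : Stmt8.enorm w ^ 2 = dot w w := by
  unfold Stmt8.enorm dot
  rw [Real.sq_sqrt (Finset.sum_nonneg fun i _ => sq_nonneg _)]
  exact Finset.sum_congr rfl fun i _ => by ring

theorem aux_smul {n : ℕ} (c : ℝ) (u w : Fin n → ℝ) : dot u (c • w) = c * dot u w := by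
  simp only [dot, Finset.mul_sum, Pi.smul_apply, smul_eq_mul]
  exact Finset.sum_congr rfl fun i _ => by ring

set_option maxHeartbeats 2000000 in
/-- Convergence time of the power iteration: if the eigenvalues of the
symmetric matrix `A` (listed with multiplicity as `lam`, nonincreasing in magnitude)
satisfy `|λ₁| > |λ₂| > 0`, `v₁` is a unit eigenvector for `λ₁`, and the initialization
satisfies `(v₁ᵀq₀)² ≥ ε`, then `(v₁ᵀq_j)² > 1 − ε` for some
`j ≤ 3·log(1/ε)/(2·log(|λ₁|/|λ₂|)) + 1`. -/
theorem power_iteration_convergence_time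
    (n : ℕ) (hn : 1 < n)
    (A : Matrix (Fin n) (Fin n) ℝ) (hA : A.IsHermitian)
    (lam : Fin n → ℝ)
    (hperm : ∃ σ : Equiv.Perm (Fin n), ∀ i, lam i = hA.eigenvalues (σ i))
    (hord : ∀ i j : Fin n, i ≤ j → |lam j| ≤ |lam i|)
    (hgap : |lam ⟨1, hn⟩| < |lam ⟨0, by omega⟩|)
    (hpos : 0 < |lam ⟨1, hn⟩|)
    (v1 : Fin n → ℝ) (hv1unit : Stmt8.enorm v1 = 1)
    (hv1eig : A *ᵥ v1 = lam ⟨0, by omega⟩ • v1)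
    (ε : ℝ) (hε0 : 0 < ε) (hε1 : ε < 1)
    (q : ℕ → Fin n → ℝ) (hq0unit : Stmt8.enorm (q 0) = 1)
    (hinit : ε ≤ dot v1 (q 0) ^ 2)
    (hrec : ∀ i : ℕ, q (i + 1) = (Stmt8.enorm (A *ᵥ q i))⁻¹ • (A *ᵥ q i)) :
    ∃ j : ℕ, (j : ℝ) ≤ 3 * Real.log (1 / ε) / (2 * Real.log (|lam ⟨0, by omega⟩| / |lam ⟨1, hn⟩|)) + 1
      ∧ 1 - ε < dot v1 (q j) ^ 2 := by
  obtain ⟨σ, hσ⟩ := hperm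
  set l1 := lam ⟨0, by omega⟩ with hl1
  set l2 := lam ⟨1, hn⟩ with hl2
  set b := hA.eigenvectorBasis with hb
  set k : Fin n := σ ⟨0, by omega⟩ with hk
  have hu : ∀ i, A *ᵥ (b i).ofLp = hA.eigenvalues i • (b i).ofLp := fun i =>
    hA.mulVec_eigenvectorBasis i
  have hmk : hA.eigenvalues k = l1 := (hσ _).symm
  have hmi : ∀ i, i ≠ k → |hA.eigenvalues i| ≤ |l2| := by
    intro i hi
    have h1 : hA.eigenvalues i = lam (σ.symm i) := by rw [hσ]; simp
    rw [h1]
    apply hord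
    rw [Fin.le_def]
    by_contra hlt
    apply hi
    have h0 : σ.symm i = ⟨0, by omega⟩ := by
      apply Fin.ext
      simp only at hlt ⊢
      omega
    rw [hk, ← h0]; simp
  have hne : ∀ i, i ≠ k → dot (b i).ofLp v1 = 0 := by
    intro i hi
    have h1 := aux_symm A hA _ v1 _ (hu i)
    rw [hv1eig, aux_smul] at h1
    have h2 : l1 - hA.eigenvalues i ≠ 0 := by
      intro h
      have : l1 = hA.eigenvalues i := by linarith
      have h3 := hmi i hi
      rw [← this] at h3
      linarith
    have h3 : (l1 - hA.eigenvalues i) * dot (b i).ofLp v1 = 0 := by linarith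
    exact (mul_eq_zero.mp h3).resolve_left h2
  have hv : ∀ w, dot v1 w = dot (b k).ofLp v1 * dot (b k).ofLp w := by
    intro w
    rw [aux_parseval b v1 w]
    apply Finset.sum_eq_single k
    · intro i _ hi
      rw [hne i hi, zero_mul]
    · simp
  have hvk : dot (b k).ofLp v1 ^ 2 = 1 := by
    rw [sq, ← hv, ← aux_enorm, hv1unit]; norm_num
  have hx : ∀ w, dot v1 w ^ 2 = dot (b k).ofLp w ^ 2 := by
    intro w
    rw [hv, mul_pow, hvk, one_mul]
  let y : (Fin n → ℝ) → ℝ := fun w => ∑ i ∈ Finset.univ.erase k, dot (b i).ofLp w ^ 2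
  have hxy : ∀ w, dot v1 w ^ 2 + y w = Stmt8.enorm w ^ 2 := by
    intro w
    rw [aux_enorm, aux_parseval b w w, hx,
      ← Finset.add_sum_erase Finset.univ _ (Finset.mem_univ k), sq]
    congr 1
    exact Finset.sum_congr rfl fun i _ => sq _
  have hxA : ∀ w, dot v1 (A *ᵥ w) ^ 2 = l1 ^ 2 * dot v1 w ^ 2 := by
    intro w
    rw [aux_symm A hA v1 w l1 hv1eig, mul_pow]
  have hyA : ∀ w, y (A *ᵥ w) ≤ l2 ^ 2 * y w := by
    intro w
    simp only [y, Finset.mul_sum]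
    refine Finset.sum_le_sum fun i hi => ?_
    rw [aux_symm A hA _ w _ (hu i), mul_pow]
    exact mul_le_mul_of_nonneg_right (sq_le_sq.mpr (hmi i (Finset.ne_of_mem_erase hi)))
      (sq_nonneg _)
  have hyc : ∀ (c : ℝ) w, y (c • w) = c ^ 2 * y w := by
    intro c w
    simp only [y, Finset.mul_sum, aux_smul, mul_pow]
  have hy0 : ∀ w, 0 ≤ y w := fun w => Finset.sum_nonneg fun i _ => sq_nonneg _
  clear_value y
  have hl1pos : 0 < l1 ^ 2 := by
    have : 0 < |l1| := hpos.trans hgap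
    rw [← sq_abs]; positivity
  have key : ∀ j, 0 < dot v1 (q j) ^ 2 ∧ dot v1 (q j) ^ 2 + y (q j) = 1 ∧
      (l1 ^ 2) ^ j * (y (q j) * ε) ≤ (l2 ^ 2) ^ j * ((1 - ε) * dot v1 (q j) ^ 2) := by
    intro j
    induction j with
    | zero =>
      have h := hxy (q 0)
      rw [hq0unit] at h
      refine ⟨by linarith, by linarith, ?_⟩
      simp only [pow_zero, one_mul]
      nlinarith
    | succ j ih =>
      obtain ⟨h1, h2, h3⟩ := ih
      have hN := hxy (A *ᵥ q j)
      have hNpos : 0 < Stmt8.enorm (A *ᵥ q j) ^ 2 := by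
        rw [← hN, hxA]
        have := hy0 (A *ᵥ q j)
        positivity
      set c := (Stmt8.enorm (A *ᵥ q j))⁻¹ with hc
      have hcN : c ^ 2 * Stmt8.enorm (A *ᵥ q j) ^ 2 = 1 := by
        rw [hc, inv_pow]; exact inv_mul_cancel₀ hNpos.ne'
      have hcpos : 0 < c ^ 2 := by
        rw [hc, inv_pow]; positivity
      rw [hrec j, hyc, aux_smul, mul_pow, ← mul_add, hN, hxA]
      refine ⟨by positivity, hcN, ?_⟩
      have h4 := hyA (q j)
      calc (l1 ^ 2) ^ (j + 1) * (c ^ 2 * y (A *ᵥ q j) * ε)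
          ≤ (l1 ^ 2) ^ (j + 1) * (c ^ 2 * (l2 ^ 2 * y (q j)) * ε) := by gcongr
        _ = (c ^ 2 * l1 ^ 2 * l2 ^ 2) * ((l1 ^ 2) ^ j * (y (q j) * ε)) := by ring
        _ ≤ (c ^ 2 * l1 ^ 2 * l2 ^ 2) * ((l2 ^ 2) ^ j * ((1 - ε) * dot v1 (q j) ^ 2)) := by
            gcongr
        _ = _ := by ring
  set R := |l1| / |l2| with hR
  have hR1 : 1 < R := by rw [hR, one_lt_div hpos]; exact hgap
  have hlR : 0 < Real.log R := Real.log_pos hR1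
  have hle : 0 < Real.log (1 / ε) := Real.log_pos (by rw [one_lt_div hε0]; exact hε1)
  set t := Real.log (1 / ε) / Real.log R with ht
  have htpos : 0 < t := div_pos hle hlR
  refine ⟨⌊t⌋₊ + 1, ?_, ?_⟩
  · have h1 := Nat.floor_le htpos.le
    have h2 : 3 * Real.log (1 / ε) / (2 * Real.log R) = 3 / 2 * t := by
      rw [ht]; field_simp
    rw [h2]; push_cast; linarith
  · have h1 : t < ((⌊t⌋₊ + 1 : ℕ) : ℝ) := by push_cast; exact Nat.lt_floor_add_one t
    generalize ⌊t⌋₊ + 1 = j at h1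
    obtain ⟨k1, k2, k3⟩ := key j
    have h2 : 1 / ε < R ^ j := by
      rw [← Real.log_lt_log_iff (by positivity) (by positivity), Real.log_pow]
      rwa [ht, div_lt_iff₀ hlR] at h1
    have h3 : |l2| ^ j < ε * |l1| ^ j := by
      rw [hR, div_pow, div_lt_div_iff₀ hε0 (by positivity)] at h2
      linarith
    have h4 : (l2 ^ 2) ^ j < ε ^ 2 * (l1 ^ 2) ^ j := by
      have := pow_lt_pow_left₀ h3 (by positivity) two_ne_zero
      rw [mul_pow, ← pow_mul, ← pow_mul, mul_comm j 2, pow_mul, pow_mul, sq_abs, sq_abs] at this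
      exact this
    have hP : 0 < (l1 ^ 2) ^ j := by positivity
    generalize (l1 ^ 2) ^ j = P at *
    generalize (l2 ^ 2) ^ j = Q at *
    generalize dot v1 (q j) ^ 2 = x at *
    have hyx : y (q j) = 1 - x := by linarith
    rw [hyx] at k3
    have h5 : Q * ((1 - ε) * x) < ε ^ 2 * P * ((1 - ε) * x) :=
      mul_lt_mul_of_pos_right h4 (mul_pos (by linarith) k1)
    have h6 : (P * ε) * (1 - x) < (P * ε) * (ε * (1 - ε) * x) := by nlinarith
    have h7 := lt_of_mul_lt_mul_left h6 (by positivity)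
    have hx1 : x ≤ 1 := by linarith [hy0 (q j)]
    have h8 : ε * (1 - ε) * x ≤ ε * (1 - ε) * 1 :=
      mul_le_mul_of_nonneg_left hx1 (mul_nonneg hε0.le (by linarith))
    nlinarith
end
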